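/- arXiv:2204.09380 — 8 statements merged into one kernel-verified Lean document; each statement's English description precedes it below -/
import Mathlib

section
/- Suppose G ≠ 0 and F + ⟪G, u_des⟫ + Λ ≥ 0. Define u* = u_des − ((F + ⟪G, u_des⟫ + Λ)/‖G‖²) • G. Then F + ⟪G, u*⟫ + Λ = 0, and u* is the unique minimizer of J(u) = (1/2)‖u − u_des‖² over the halfspace H = {u ∈ ℝ^m : F + ⟪G, u⟫ + Λ ≤ 0}. (This is the explicit formula (10a) of Case 2 of the CBF-QP: projection of the desired input onto the control Barrier function constraint.) -/
open RealInnerProductSpace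

/-- Case 2 formula (10a) of the CBF-QP: if `G ≠ 0` and `F + ⟪G, u_des⟫ + Λ ≥ 0`, then
`u* = u_des − ((F + ⟪G, u_des⟫ + Λ)/‖G‖²) • G` makes the control Barrier function constraint
active and is the unique minimizer of `J(u) = (1/2)‖u − u_des‖²` over the halfspace
`H = {u : F + ⟪G, u⟫ + Λ ≤ 0}`. -/
theorem cbf_qp_case2_halfspace (m : ℕ) (F Λ : ℝ) (G u_des : EuclideanSpace ℝ (Fin m))
    (hG : G ≠ 0) (hpos : F + ⟪G, u_des⟫ + Λ ≥ 0)
    (uStar : EuclideanSpace ℝ (Fin m))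
    (huStar : uStar = u_des - ((F + ⟪G, u_des⟫ + Λ) / ‖G‖ ^ 2) • G)
    (H : Set (EuclideanSpace ℝ (Fin m)))
    (hH : H = {u | F + ⟪G, u⟫ + Λ ≤ 0})
    (J : EuclideanSpace ℝ (Fin m) → ℝ)
    (hJ : ∀ u, J u = (1 / 2) * ‖u - u_des‖ ^ 2) :
    F + ⟪G, uStar⟫ + Λ = 0 ∧ uStar ∈ H ∧
      (∀ u ∈ H, J uStar ≤ J u) ∧ (∀ u ∈ H, J u = J uStar → u = uStar) := by
  have hG2 : ‖G‖ ^ 2 ≠ 0 := pow_ne_zero 2 (norm_ne_zero_iff.mpr hG)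
  have hactive : F + ⟪G, uStar⟫ + Λ = 0 := by
    rw [huStar, inner_sub_right, real_inner_smul_right, real_inner_self_eq_norm_sq,
      div_mul_cancel₀ _ hG2]
    ring
  have hgrowth : ∀ u ∈ H, J uStar + 1 / 2 * ‖u - uStar‖ ^ 2 ≤ J u := by
    intro u hu
    rw [hH, Set.mem_ofPred_eq] at hu
    have hc : 0 ≤ (F + ⟪G, u_des⟫ + Λ) / ‖G‖ ^ 2 := div_nonneg hpos (sq_nonneg _)
    have hdir : uStar - u_des = -(((F + ⟪G, u_des⟫ + Λ) / ‖G‖ ^ 2) • G) := by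
      rw [huStar]
      abel
    have hcross : 0 ≤ ⟪u - uStar, uStar - u_des⟫ := by
      rw [hdir, inner_neg_right, real_inner_smul_right, real_inner_comm G, inner_sub_right,
        ← mul_neg]
      exact mul_nonneg hc (by linarith)
    have hexpand := norm_add_sq_real (u - uStar) (uStar - u_des)
    rw [sub_add_sub_cancel] at hexpand
    rw [hJ, hJ]
    linarith
  refine ⟨hactive, hH ▸ hactive.le, fun u hu => ?_, fun u hu heq => ?_⟩
  · linarith [hgrowth u hu, sq_nonneg ‖u - uStar‖]
  · have hdist : ‖u - uStar‖ ^ 2 = 0 :=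
      le_antisymm (by linarith [hgrowth u hu]) (sq_nonneg _)
    exact sub_eq_zero.mp (norm_eq_zero.mp (pow_eq_zero_iff two_ne_zero |>.mp hdist))
end

section
/- Suppose G ≠ 0 and F + ⟪G, u_des⟫ + Λ ≥ 0, and set u* = u_des − ((F + ⟪G, u_des⟫ + Λ)/‖G‖²) • G. If additionally A·u* + b ≤ 0 (componentwise), then u* is the unique minimizer of J on the full feasible set K. (Case 2 of the explicit CBF-QP solution: the control Barrier function constraint is active and all control-limit constraints are inactive.) -/
open RealInnerProductSpace Matrix

/-- Case 2 of the explicit CBF-QP solution: if `G ≠ 0`, `F + ⟪G, u_des⟫ + Λ ≥ 0`, and the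
projected input `u* = u_des − ((F + ⟪G, u_des⟫ + Λ)/‖G‖²) • G` also satisfies the control-limit
constraints `A·u* + b ≤ 0`, then `u*` is the unique minimizer of `J` on the full feasible
set `K`. -/
theorem cbf_qp_case2_full (m p : ℕ) (F Λ : ℝ) (G u_des : EuclideanSpace ℝ (Fin m))
    (A : Matrix (Fin p) (Fin m) ℝ) (b : Fin p → ℝ)
    (hG : G ≠ 0) (hpos : F + ⟪G, u_des⟫ + Λ ≥ 0)
    (uStar : EuclideanSpace ℝ (Fin m))
    (huStar : uStar = u_des - ((F + ⟪G, u_des⟫ + Λ) / ‖G‖ ^ 2) • G)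
    (hlim : ∀ i, A.mulVec uStar i + b i ≤ 0)
    (K : Set (EuclideanSpace ℝ (Fin m)))
    (hK : K = {u | F + ⟪G, u⟫ + Λ ≤ 0 ∧ ∀ i, A.mulVec u i + b i ≤ 0})
    (J : EuclideanSpace ℝ (Fin m) → ℝ)
    (hJ : ∀ u, J u = (1 / 2) * ‖u - u_des‖ ^ 2) :
    uStar ∈ K ∧ (∀ u ∈ K, J uStar ≤ J u) ∧ (∀ u ∈ K, J u = J uStar → u = uStar) := by
  set c := (F + ⟪G, u_des⟫ + Λ) / ‖G‖ ^ 2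
  have hG2 : ‖G‖ ^ 2 ≠ 0 := pow_ne_zero 2 (norm_ne_zero_iff.mpr hG)
  have hc0 : 0 ≤ c := div_nonneg hpos (sq_nonneg _)
  have hactive : F + ⟪G, uStar⟫ + Λ = 0 := by
    have hcG : c * ‖G‖ ^ 2 = F + ⟪G, u_des⟫ + Λ := div_mul_cancel₀ _ hG2
    rw [huStar, inner_sub_right, real_inner_smul_right, real_inner_self_eq_norm_sq]
    linarith
  -- `J` grows at least quadratically away from `uStar` on `K`.
  have hgrowth : ∀ u ∈ K, J uStar + (1 / 2) * ‖u - uStar‖ ^ 2 ≤ J u := by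
    intro u hu
    rw [hK] at hu
    have hinner : ⟪G, u - uStar⟫ ≤ 0 := by
      rw [inner_sub_right]
      linarith [hu.1]
    have hdir : uStar - u_des = -(c • G) := by
      rw [huStar]
      abel
    have hexpand := norm_add_sq_real (u - uStar) (uStar - u_des)
    have hcross : ⟪u - uStar, uStar - u_des⟫ = -(c * ⟪G, u - uStar⟫) := by
      rw [hdir, inner_neg_right, real_inner_smul_right, real_inner_comm]
    rw [sub_add_sub_cancel, hcross] at hexpand
    rw [hJ, hJ, hexpand]
    linarith [mul_nonpos_of_nonneg_of_nonpos hc0 hinner]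
  refine ⟨?_, fun u hu => ?_, fun u hu hEq => ?_⟩
  · rw [hK]
    exact ⟨hactive.le, hlim⟩
  · linarith [hgrowth u hu, sq_nonneg ‖u - uStar‖]
  · have hzero : ‖u - uStar‖ ^ 2 = 0 :=
      le_antisymm (by linarith [hgrowth u hu]) (sq_nonneg _)
    exact sub_eq_zero.mp (norm_eq_zero.mp (pow_eq_zero_iff two_ne_zero |>.mp hzero))
end

section
/- Suppose G ∈ ℝ^m is nonzero, A_I is a real k×m matrix, and the k+1 vectors consisting of the rows of A_I together with G are linearly independent. Then the k×k matrix A_I·(I_m − (1/‖G‖²)·G Gᵀ)·A_Iᵀ is positive definite, and in particular invertible. (Invertibility of the matrix defining the multiplier μ in Case 3 of the CBF-QP, under the paper's standing assumption that the active constraints are linearly independent.) -/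
open RealInnerProductSpace Matrix

/-- The quadratic form of the projection `1 - (1 / (g ⬝ᵥ g)) g gᵀ` at `v` is the squared length of
the component of `v` orthogonal to `g`. -/
lemma dotProduct_one_sub_vecMulVec_mulVec {n : Type*} [Fintype n] [DecidableEq n]
    {g : n → ℝ} (hg : g ⬝ᵥ g ≠ 0) (v : n → ℝ) :
    v ⬝ᵥ ((1 : Matrix n n ℝ) - (1 / (g ⬝ᵥ g)) • vecMulVec g g) *ᵥ v =
      (v - (g ⬝ᵥ v / (g ⬝ᵥ g)) • g) ⬝ᵥ (v - (g ⬝ᵥ v / (g ⬝ᵥ g)) • g) := by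
  simp only [sub_mulVec, one_mulVec, smul_mulVec, vecMulVec_mulVec, dotProduct_sub, sub_dotProduct,
    dotProduct_smul, smul_dotProduct, smul_eq_mul, op_smul_eq_smul,
    dotProduct_comm v g]
  field_simp
  ring

/-- If `g` together with the rows of `A` is linearly independent, then a nontrivial combination of
the rows of `A` is not a multiple of `g`. -/
lemma vecMul_sub_smul_ne_zero {k : ℕ} {n : Type*} {g : n → ℝ} {A : Matrix (Fin k) n ℝ}
    (h : LinearIndependent ℝ (vecCons g (fun i => A i))) {y : Fin k → ℝ} (hy : y ≠ 0) (c : ℝ) :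
    y ᵥ* A - c • g ≠ 0 := by
  intro h0
  refine hy (funext fun i => ?_)
  have hsum : ∑ j, (vecCons (-c) y : Fin (k + 1) → ℝ) j • vecCons g (fun i => A i) j = 0 := by
    rw [Fin.sum_univ_succ]
    simp only [cons_val_zero, cons_val_succ]
    rw [← h0, vecMul_eq_sum, neg_smul]
    abel
  simpa using Fintype.linearIndependent_iff.mp h _ hsum i.succ

/-- If `G ≠ 0` and the rows of `A_I` together with `G` are linearly independent, then
`A_I (I − (1/‖G‖²) G Gᵀ) A_Iᵀ` is symmetric positive definite, and in particular invertible. -/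
theorem cbf_qp_Gminus_posdef (m k : ℕ) (G : EuclideanSpace ℝ (Fin m)) (hG : G ≠ 0)
    (AI : Matrix (Fin k) (Fin m) ℝ)
    (hind : LinearIndependent ℝ (Matrix.vecCons (G : Fin m → ℝ) (fun i => AI i)))
    (Q : Matrix (Fin k) (Fin k) ℝ)
    (hQ : Q = AI * ((1 : Matrix (Fin m) (Fin m) ℝ) - (1 / ‖G‖ ^ 2) • vecMulVec G G) * AIᵀ) :
    Qᵀ = Q ∧ (∀ y : Fin k → ℝ, y ≠ 0 → 0 < y ⬝ᵥ Q.mulVec y) ∧ IsUnit Q := by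
  have hnorm : ‖G‖ ^ 2 = (G : Fin m → ℝ) ⬝ᵥ G := by
    rw [EuclideanSpace.real_norm_sq_eq]
    simp [dotProduct, sq]
  have hGG : (G : Fin m → ℝ) ⬝ᵥ G ≠ 0 := by
    rw [← hnorm]
    exact pow_ne_zero 2 (norm_ne_zero_iff.mpr hG)
  have hsymm : Qᵀ = Q := by
    simp [hQ, transpose_mul, transpose_vecMulVec, Matrix.mul_assoc]
  have hpos : ∀ y : Fin k → ℝ, y ≠ 0 → 0 < y ⬝ᵥ Q *ᵥ y := by
    intro y hy
    rw [hQ, hnorm, ← mulVec_mulVec, ← mulVec_mulVec, dotProduct_mulVec, mulVec_transpose,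
      dotProduct_one_sub_vecMulVec_mulVec hGG]
    simpa only [star_trivial] using
      dotProduct_self_star_pos_iff.mpr (vecMul_sub_smul_ne_zero hind hy _)
  refine ⟨hsymm, hpos, (PosDef.of_dotProduct_mulVec_pos ?_ fun y hy => ?_).isUnit⟩
  · simpa [IsHermitian, conjTranspose_eq_transpose_of_trivial] using hsymm
  · simpa using hpos y hy
end

section
/- Suppose G ∈ ℝ^m is nonzero, A_I is a real k×m matrix, b_I ∈ ℝ^k, and the matrix M = A_I·G̃⁻·A_Iᵀ is invertible, where G̃⁻ = I_m − (1/‖G‖²)·G Gᵀ. Define μ = M⁻¹·(A_I·G̃⁻·u_des − ((F + Λ)/‖G‖²)·A_I·G + b_I), λ = (F + ⟪G, u_des⟫ + Λ − ⟪G, A_Iᵀ·μ⟫)/‖G‖², and u* = u_des − λ • G − A_Iᵀ·μ. Then these quantities satisfy the Case-3 KKT equality system: u* − u_des + λ • G + A_Iᵀ·μ = 0, F + ⟪G, u*⟫ + Λ = 0, and A_I·u* + b_I = 0. (Explicit closed-form solution (12) of Case 3 of the CBF-QP, where both the control Barrier function constraint and the control-limit constraints indexed by I are active.) -/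
open RealInnerProductSpace Matrix

/-- `I - c G Gᵀ` acts on `v` as `v - c ⟪G, v⟫ G`. -/
theorem one_sub_smul_vecMulVec_mulVec {m : ℕ} (c : ℝ) (G v : EuclideanSpace ℝ (Fin m)) :
    ((1 : Matrix (Fin m) (Fin m) ℝ) - c • vecMulVec G G).mulVec v =
      WithLp.ofLp v - (c * ⟪G, v⟫) • WithLp.ofLp G := by
  have hinner : ⟪G, v⟫ = WithLp.ofLp G ⬝ᵥ WithLp.ofLp v := by
    simp [EuclideanSpace.inner_eq_star_dotProduct, dotProduct_comm]
  rw [sub_mulVec, one_mulVec, smul_mulVec, vecMulVec_mulVec, hinner]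
  ext i
  simp
  ring

/-- Explicit closed-form solution (12) of Case 3 of the CBF-QP: with
`G̃⁻ = I − (1/‖G‖²) G Gᵀ`, `M = A_I G̃⁻ A_Iᵀ` invertible,
`μ = M⁻¹(A_I G̃⁻ u_des − ((F+Λ)/‖G‖²) A_I G + b_I)`,
`λ = (F + ⟪G, u_des⟫ + Λ − ⟪G, A_Iᵀ μ⟫)/‖G‖²` and `u* = u_des − λ•G − A_Iᵀ μ`,
the Case-3 KKT equality system holds: stationarity, active CBF constraint and active
control-limit constraints. -/
theorem cbf_qp_case3_formula (m k : ℕ) (F Λ : ℝ) (G u_des : EuclideanSpace ℝ (Fin m))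
    (hG : G ≠ 0)
    (AI : Matrix (Fin k) (Fin m) ℝ) (bI : Fin k → ℝ)
    (Gminus : Matrix (Fin m) (Fin m) ℝ)
    (hGminus : Gminus = (1 : Matrix (Fin m) (Fin m) ℝ) - (1 / ‖G‖ ^ 2) • vecMulVec G G)
    (M : Matrix (Fin k) (Fin k) ℝ) (hM : M = AI * Gminus * AIᵀ) (hMinv : IsUnit M)
    (μ : Fin k → ℝ)
    (hμ : μ = M⁻¹.mulVec ((AI * Gminus).mulVec u_des - ((F + Λ) / ‖G‖ ^ 2) • AI.mulVec G + bI))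
    (lam : ℝ)
    (hlam : lam = (F + ⟪G, u_des⟫ + Λ -
      ⟪G, (WithLp.equiv 2 (Fin m → ℝ)).symm (AIᵀ.mulVec μ)⟫) / ‖G‖ ^ 2)
    (uStar : EuclideanSpace ℝ (Fin m))
    (huStar : uStar = u_des - lam • G - (WithLp.equiv 2 (Fin m → ℝ)).symm (AIᵀ.mulVec μ)) :
    uStar - u_des + lam • G + (WithLp.equiv 2 (Fin m → ℝ)).symm (AIᵀ.mulVec μ) = 0 ∧
      F + ⟪G, uStar⟫ + Λ = 0 ∧
      AI.mulVec uStar + bI = 0 := by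
  have hn : ‖G‖ ^ 2 ≠ 0 := pow_ne_zero 2 (norm_ne_zero_iff.mpr hG)
  refine ⟨by rw [huStar]; abel, ?_, ?_⟩
  · rw [huStar, inner_sub_right, inner_sub_right, inner_smul_right,
      real_inner_self_eq_norm_sq, hlam]
    field_simp
    ring
  · have hMμ : M.mulVec μ =
        (AI * Gminus).mulVec u_des - ((F + Λ) / ‖G‖ ^ 2) • AI.mulVec G + bI := by
      rw [hμ, mulVec_mulVec, mul_nonsing_inv _ ((isUnit_iff_isUnit_det M).mp hMinv),
        one_mulVec]
    set w : EuclideanSpace ℝ (Fin m) := (WithLp.equiv 2 (Fin m → ℝ)).symm (AIᵀ.mulVec μ)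
    have hwv : AIᵀ.mulVec μ = WithLp.ofLp w := rfl
    rw [hM, ← mulVec_mulVec, ← mulVec_mulVec, ← mulVec_mulVec, hwv, hGminus,
      one_sub_smul_vecMulVec_mulVec, one_sub_smul_vecMulVec_mulVec, mulVec_sub, mulVec_sub,
      mulVec_smul, mulVec_smul] at hMμ
    rw [huStar, WithLp.ofLp_sub, WithLp.ofLp_sub, WithLp.ofLp_smul, mulVec_sub, mulVec_sub,
      mulVec_smul, hlam]
    ext i
    have hi := congrFun hMμ i
    simp only [Pi.sub_apply, Pi.add_apply, Pi.smul_apply, smul_eq_mul, Pi.zero_apply] at hi ⊢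
    linear_combination -hi
end

section
/- Let C ⊆ ℝ^n be open, let F, Λ : C → ℝ and u_des, G : C → ℝ^m be locally Lipschitz functions, and suppose G(x) ≠ 0 for every x ∈ C. Then the map x ↦ u_des(x) − ((F(x) + ⟪G(x), u_des(x)⟫ + Λ(x))/‖G(x)‖²) • G(x) is locally Lipschitz on C. (Lipschitz continuity of the explicit Case-2 safe control law (10a) on its critical region, the core of Theorem 2: the optimal control law u*(x) of the feasible CBF-QP is locally Lipschitz continuous.) -/
open RealInnerProductSpace

lemma LocallyLipschitzOn.prodMk {α β γ : Type*} [PseudoEMetricSpace α] [PseudoEMetricSpace β]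
    [PseudoEMetricSpace γ] {s : Set α} {f : α → β} {g : α → γ}
    (hf : LocallyLipschitzOn s f) (hg : LocallyLipschitzOn s g) :
    LocallyLipschitzOn s fun x => (f x, g x) := by
  intro x hx
  obtain ⟨K, t, ht, hft⟩ := hf hx
  obtain ⟨L, v, hv, hgv⟩ := hg hx
  exact ⟨max K L, t ∩ v, Filter.inter_mem ht hv,
    (hft.mono Set.inter_subset_left).prodMk (hgv.mono Set.inter_subset_right)⟩

/-- Postcomposing a locally Lipschitz function with a map that is `C¹` near its values gives a
locally Lipschitz function. -/
lemma LocallyLipschitzOn.contDiffAt_comp {α E E' : Type*} [PseudoEMetricSpace α]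
    [NormedAddCommGroup E] [NormedSpace ℝ E] [NormedAddCommGroup E'] [NormedSpace ℝ E']
    {s : Set α} {f : α → E} {Φ : E → E'} (hf : LocallyLipschitzOn s f)
    (hΦ : ∀ x ∈ s, ContDiffAt ℝ 1 Φ (f x)) : LocallyLipschitzOn s fun x => Φ (f x) := by
  intro x hx
  obtain ⟨K, t, ht, hft⟩ := hf hx
  obtain ⟨L, v, hv, hΦv⟩ := (hΦ x hx).exists_lipschitzOnWith
  exact ⟨L * K, t ∩ f ⁻¹' v, Filter.inter_mem ht (hf.continuousOn x hx hv),
    hΦv.comp (hft.mono Set.inter_subset_left) fun _ hy => hy.2⟩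

/-- Lipschitz continuity of the explicit Case-2 safe control law (10a): if `F, Λ, u_des, G`
are locally Lipschitz on an open set `C ⊆ ℝⁿ` and `G(x) ≠ 0` on `C`, then
`x ↦ u_des(x) − ((F(x) + ⟪G(x), u_des(x)⟫ + Λ(x))/‖G(x)‖²) • G(x)` is locally Lipschitz
on `C`. -/
theorem case2_control_law_locallyLipschitz (n m : ℕ)
    (C : Set (EuclideanSpace ℝ (Fin n))) (hC : IsOpen C)
    (F Λ : EuclideanSpace ℝ (Fin n) → ℝ)
    (u_des G : EuclideanSpace ℝ (Fin n) → EuclideanSpace ℝ (Fin m))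
    (hF : LocallyLipschitzOn C F) (hΛ : LocallyLipschitzOn C Λ)
    (hu : LocallyLipschitzOn C u_des) (hG : LocallyLipschitzOn C G)
    (hGne : ∀ x ∈ C, G x ≠ 0) :
    LocallyLipschitzOn C (fun x =>
      u_des x - ((F x + ⟪G x, u_des x⟫ + Λ x) / ‖G x‖ ^ 2) • G x) := by
  refine ((hF.prodMk hΛ).prodMk (hu.prodMk hG)).contDiffAt_comp
    (Φ := fun p : (ℝ × ℝ) × EuclideanSpace ℝ (Fin m) × EuclideanSpace ℝ (Fin m) =>
      p.2.1 - ((p.1.1 + ⟪p.2.2, p.2.1⟫ + p.1.2) / ‖p.2.2‖ ^ 2) • p.2.2) fun x hx => ?_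
  have hnum : ContDiff ℝ 1
      fun p : (ℝ × ℝ) × EuclideanSpace ℝ (Fin m) × EuclideanSpace ℝ (Fin m) =>
        p.1.1 + ⟪p.2.2, p.2.1⟫ + p.1.2 :=
    (contDiff_fst.fst.add (contDiff_snd.snd.inner ℝ contDiff_snd.fst)).add contDiff_fst.snd
  have hden : ContDiff ℝ 1
      fun p : (ℝ × ℝ) × EuclideanSpace ℝ (Fin m) × EuclideanSpace ℝ (Fin m) =>
        ‖p.2.2‖ ^ 2 := contDiff_snd.snd.norm_sq ℝ
  exact contDiff_snd.fst.contDiffAt.sub ((hnum.contDiffAt.div hden.contDiffAt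
    (pow_ne_zero 2 (norm_ne_zero_iff.mpr (hGne x hx)))).smul contDiff_snd.snd.contDiffAt)
end

section
/- Suppose p_s > 0 and p_s·‖G‖² + Λ² ≠ 0. Define λ = p_s·(F + ⟪G, u_des⟫ + Λ)/(p_s·‖G‖² + Λ²), s* = 1 − (Λ/p_s)·λ, and u* = u_des − λ • G. Then these quantities satisfy the Case-2 KKT equality system of the adaptive CBF-QP: p_s·s* − p_s + Λ·λ = 0, λ • G + u* − u_des = 0, and F + ⟪G, u*⟫ + s*·Λ = 0. (Explicit closed-form solution (16) of Case 2 of the adaptive CBF-QP, where the control Barrier function constraint is active and all control-limit constraints are inactive.) -/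
open RealInnerProductSpace

/-- Explicit closed-form solution (16) of Case 2 of the adaptive CBF-QP: with
`λ = p_s(F + ⟪G, u_des⟫ + Λ)/(p_s‖G‖² + Λ²)`, `s* = 1 − (Λ/p_s)λ` and `u* = u_des − λ•G`,
the Case-2 KKT equality system holds. -/
theorem adaptive_cbf_qp_case2_formula (m : ℕ) (F Λ : ℝ)
    (G u_des : EuclideanSpace ℝ (Fin m))
    (p_s : ℝ) (hp : 0 < p_s) (hden : p_s * ‖G‖ ^ 2 + Λ ^ 2 ≠ 0)
    (lam : ℝ) (hlam : lam = p_s * (F + ⟪G, u_des⟫ + Λ) / (p_s * ‖G‖ ^ 2 + Λ ^ 2))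
    (sStar : ℝ) (hs : sStar = 1 - (Λ / p_s) * lam)
    (uStar : EuclideanSpace ℝ (Fin m)) (hu : uStar = u_des - lam • G) :
    p_s * sStar - p_s + Λ * lam = 0 ∧
      lam • G + uStar - u_des = 0 ∧
      F + ⟪G, uStar⟫ + sStar * Λ = 0 := by
  have hlam_mul : lam * (p_s * ‖G‖ ^ 2 + Λ ^ 2) = p_s * (F + ⟪G, u_des⟫ + Λ) := by
    rw [hlam, div_mul_cancel₀ _ hden]
  have hs_mul : p_s * sStar = p_s - Λ * lam := by
    rw [hs]
    field_simp
  refine ⟨by linarith, by rw [hu]; abel, ?_⟩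
  rw [hu, inner_sub_right, real_inner_smul_right, real_inner_self_eq_norm_sq]
  apply mul_left_cancel₀ hp.ne'
  linear_combination Λ * hs_mul - hlam_mul
end

section
/- Suppose p_s > 0 and p_s·‖G‖² + Λ² ≠ 0, and define λ = p_s·(F + ⟪G, u_des⟫ + Λ)/(p_s·‖G‖² + Λ²), s* = 1 − (Λ/p_s)·λ, u* = u_des − λ • G. If λ ≥ 0 and A·u* + b ≤ 0 componentwise, then (s*, u*) ∈ K_a and (s*, u*) is the unique minimizer of J_a on K_a. (Global optimality of the explicit Case-2 solution of the adaptive CBF-QP on its critical region.) -/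
open RealInnerProductSpace Matrix

/-- Global optimality of the explicit Case-2 solution of the adaptive CBF-QP on its critical
region: if `λ ≥ 0` and the control limits are inactive at `u*`, then `(s*, u*)` is the unique
minimizer of `J_a` on `K_a`. -/
theorem adaptive_cbf_qp_case2_optimal (m p : ℕ) (F Λ : ℝ)
    (G u_des : EuclideanSpace ℝ (Fin m))
    (A : Matrix (Fin p) (Fin m) ℝ) (b : Fin p → ℝ)
    (p_s : ℝ) (hp : 0 < p_s) (hden : p_s * ‖G‖ ^ 2 + Λ ^ 2 ≠ 0)
    (lam : ℝ) (hlam : lam = p_s * (F + ⟪G, u_des⟫ + Λ) / (p_s * ‖G‖ ^ 2 + Λ ^ 2))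
    (sStar : ℝ) (hs : sStar = 1 - (Λ / p_s) * lam)
    (uStar : EuclideanSpace ℝ (Fin m)) (hu : uStar = u_des - lam • G)
    (hlamnn : 0 ≤ lam) (hlim : ∀ i, A.mulVec uStar i + b i ≤ 0)
    (Ka : Set (ℝ × EuclideanSpace ℝ (Fin m)))
    (hKa : Ka = {q | F + ⟪G, q.2⟫ + q.1 * Λ ≤ 0 ∧ ∀ i, A.mulVec q.2 i + b i ≤ 0})
    (Ja : ℝ × EuclideanSpace ℝ (Fin m) → ℝ)
    (hJa : ∀ q, Ja q = (p_s / 2) * (q.1 - 1) ^ 2 + (1 / 2) * ‖q.2 - u_des‖ ^ 2) :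
    (sStar, uStar) ∈ Ka ∧ (∀ q ∈ Ka, Ja (sStar, uStar) ≤ Ja q) ∧
      (∀ q ∈ Ka, Ja q = Ja (sStar, uStar) → q = (sStar, uStar)) := by
  have active : F + ⟪G, uStar⟫ + sStar * Λ = 0 := by
    rw [hu, inner_sub_right, inner_smul_right, real_inner_self_eq_norm_sq, hs, hlam]
    field_simp
    ring
  have expand : ∀ q, Ja q = Ja (sStar, uStar) + (p_s / 2) * (q.1 - sStar) ^ 2
      + (1 / 2) * ‖q.2 - uStar‖ ^ 2 - lam * (F + ⟪G, q.2⟫ + q.1 * Λ) := by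
    intro q
    have norm_split : ‖q.2 - u_des‖ ^ 2 = ‖q.2 - uStar‖ ^ 2
        - 2 * lam * (⟪G, q.2⟫ - ⟪G, uStar⟫) + ‖uStar - u_des‖ ^ 2 := by
      have h : uStar - u_des = -(lam • G) := by rw [hu]; abel
      rw [← sub_add_sub_cancel q.2 uStar u_des, norm_add_sq_real, h, inner_neg_right,
        inner_smul_right, real_inner_comm, inner_sub_right]
      ring
    have slack : p_s * (sStar - 1) = -(Λ * lam) := by
      rw [hs]
      field_simp
      ring
    simp only [hJa, norm_split]
    linear_combination (q.1 - sStar) * slack + lam * active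
  subst hKa
  refine ⟨⟨active.le, hlim⟩, fun q hq => ?_, fun q hq heq => ?_⟩
  · have hmul := mul_nonpos_of_nonneg_of_nonpos hlamnn hq.1
    have hsq : 0 ≤ (p_s / 2) * (q.1 - sStar) ^ 2 := by positivity
    have hnorm : 0 ≤ (1 / 2) * ‖q.2 - uStar‖ ^ 2 := by positivity
    linarith [expand q]
  · have hmul := mul_nonpos_of_nonneg_of_nonpos hlamnn hq.1
    have hsq : 0 ≤ (p_s / 2) * (q.1 - sStar) ^ 2 := by positivity
    have hnorm : 0 ≤ (1 / 2) * ‖q.2 - uStar‖ ^ 2 := by positivity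
    have hsq0 : (p_s / 2) * (q.1 - sStar) ^ 2 = 0 := by linarith [expand q]
    have hnorm0 : ‖q.2 - uStar‖ ^ 2 = 0 := by linarith [expand q]
    refine Prod.ext ?_ ?_
    · exact sub_eq_zero.mp
        (pow_eq_zero_iff two_ne_zero |>.mp ((mul_eq_zero.mp hsq0).resolve_left (by positivity)))
    · exact sub_eq_zero.mp (norm_eq_zero.mp (pow_eq_zero_iff two_ne_zero |>.mp hnorm0))
end

section
/- Suppose p_s > 0, A_I is a real k×m matrix with linearly independent rows, b_I ∈ ℝ^k, Ã⁻ = I_m − A_Iᵀ·(A_I·A_Iᵀ)⁻¹·A_I, and D := p_s·⟪G, Ã⁻·G⟫ + Λ² ≠ 0. Define λ = (p_s/D)·(F + ⟪G, Ã⁻·u_des⟫ + Λ − ⟪G, A_Iᵀ·(A_I·A_Iᵀ)⁻¹·b_I⟫), μ = (A_I·A_Iᵀ)⁻¹·(A_I·u_des − λ·A_I·G + b_I), u* = u_des − A_Iᵀ·μ − λ • G, and s* = 1 − (Λ/p_s)·λ. Then these quantities satisfy the Case-3 KKT equality system of the adaptive CBF-QP: p_s·s* − p_s + Λ·λ = 0,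 A_Iᵀ·μ + λ • G + u* − u_des = 0, F + ⟪G, u*⟫ + s*·Λ = 0, and A_I·u* + b_I = 0. (Explicit closed-form solution (20) of Case 3 of the adaptive CBF-QP, where both the control Barrier function constraint and the control-limit constraints indexed by I are active.) -/
open RealInnerProductSpace Matrix

/-- The Gram matrix of linearly independent rows is invertible. -/
theorem isUnit_det_mul_transpose_of_linearIndependent {k m : ℕ}
    (A : Matrix (Fin k) (Fin m) ℝ) (hA : LinearIndependent ℝ (fun i => A i)) :
    IsUnit (A * Aᵀ).det := by
  have hpos : (A * Aᴴ).PosDef :=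
    Matrix.PosDef.mul_conjTranspose_self A (Matrix.vecMul_injective_iff.2 hA)
  rw [Matrix.conjTranspose_eq_transpose_of_trivial] at hpos
  exact isUnit_iff_ne_zero.2 (ne_of_gt hpos.det_pos)

/-- Explicit closed-form solution (20) of Case 3 of the adaptive CBF-QP: with
`Ã⁻ = I − A_Iᵀ(A_I A_Iᵀ)⁻¹A_I`, `D = p_s ⟪G, Ã⁻ G⟫ + Λ² ≠ 0`,
`λ = (p_s/D)(F + ⟪G, Ã⁻ u_des⟫ + Λ − ⟪G, A_Iᵀ(A_I A_Iᵀ)⁻¹ b_I⟫)`,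
`μ = (A_I A_Iᵀ)⁻¹(A_I u_des − λ A_I G + b_I)`, `u* = u_des − A_Iᵀμ − λ•G`, and
`s* = 1 − (Λ/p_s)λ`, the Case-3 KKT equality system of the adaptive CBF-QP holds. -/
theorem adaptive_cbf_qp_case3_formula (m k : ℕ) (F Λ : ℝ)
    (G u_des : EuclideanSpace ℝ (Fin m))
    (p_s : ℝ) (hp : 0 < p_s)
    (AI : Matrix (Fin k) (Fin m) ℝ) (bI : Fin k → ℝ)
    (hAI : LinearIndependent ℝ (fun i => AI i))
    (Atil : Matrix (Fin m) (Fin m) ℝ)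
    (hAtil : Atil = 1 - AIᵀ * (AI * AIᵀ)⁻¹ * AI)
    (D : ℝ) (hD : D = p_s * (G ⬝ᵥ Atil.mulVec G) + Λ ^ 2) (hDne : D ≠ 0)
    (lam : ℝ)
    (hlam : lam = (p_s / D) *
      (F + ⟪G, (WithLp.equiv 2 (Fin m → ℝ)).symm (Atil.mulVec u_des)⟫ + Λ -
        ⟪G, (WithLp.equiv 2 (Fin m → ℝ)).symm (AIᵀ.mulVec ((AI * AIᵀ)⁻¹.mulVec bI))⟫))
    (μ : Fin k → ℝ)
    (hμ : μ = (AI * AIᵀ)⁻¹.mulVec (AI.mulVec u_des - lam • AI.mulVec G + bI))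
    (uStar : EuclideanSpace ℝ (Fin m))
    (huStar : uStar = u_des - (WithLp.equiv 2 (Fin m → ℝ)).symm (AIᵀ.mulVec μ) - lam • G)
    (sStar : ℝ) (hs : sStar = 1 - (Λ / p_s) * lam) :
    p_s * sStar - p_s + Λ * lam = 0 ∧
      (WithLp.equiv 2 (Fin m → ℝ)).symm (AIᵀ.mulVec μ) + lam • G + uStar - u_des = 0 ∧
      F + ⟪G, uStar⟫ + sStar * Λ = 0 ∧
      AI.mulVec uStar + bI = 0 := by
  have hp0 : p_s ≠ 0 := hp.ne'
  have hdet := isUnit_det_mul_transpose_of_linearIndependent AI hAI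
  have hinner : ∀ x : EuclideanSpace ℝ (Fin m), ⟪G, x⟫ = G.ofLp ⬝ᵥ x.ofLp := fun x => by
    rw [EuclideanSpace.inner_eq_star_dotProduct, star_trivial, dotProduct_comm]
  have hu : uStar.ofLp = u_des.ofLp - AIᵀ *ᵥ μ - lam • G.ofLp := by
    rw [huStar]; rfl
  have hu' : uStar.ofLp = Atil *ᵥ u_des.ofLp - lam • (Atil *ᵥ G.ofLp)
      - AIᵀ *ᵥ ((AI * AIᵀ)⁻¹ *ᵥ bI) := by
    rw [hu, hμ, hAtil]
    simp only [Matrix.mulVec_add, Matrix.mulVec_sub, Matrix.mulVec_smul, Matrix.sub_mulVec,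
      Matrix.one_mulVec, ← Matrix.mulVec_mulVec, smul_sub]
    abel
  refine ⟨?_, ?_, ?_, ?_⟩
  · rw [hs]
    field_simp
    ring
  · rw [huStar]
    abel
  · have hlamD : lam * D = p_s * (F + G.ofLp ⬝ᵥ (Atil *ᵥ u_des.ofLp) + Λ -
        G.ofLp ⬝ᵥ (AIᵀ *ᵥ ((AI * AIᵀ)⁻¹ *ᵥ bI))) := by
      rw [hlam, hinner, hinner]
      simp only [WithLp.equiv_symm_apply]
      field_simp
    rw [hinner, hu', hs, dotProduct_sub, dotProduct_sub, dotProduct_smul, smul_eq_mul]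
    rw [hD] at hlamD
    field_simp
    linear_combination -hlamD
  · have hμ' : AI *ᵥ (AIᵀ *ᵥ μ) = AI *ᵥ u_des.ofLp - lam • AI *ᵥ G.ofLp + bI := by
      rw [hμ, Matrix.mulVec_mulVec, Matrix.mulVec_mulVec, Matrix.mul_nonsing_inv _ hdet,
        Matrix.one_mulVec]
    rw [hu, Matrix.mulVec_sub, Matrix.mulVec_sub, hμ', Matrix.mulVec_smul]
    abel
end
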